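/- Let L ≥ 1, a < b with b − a ≥ 1, k ≥ 1 an integer and r > 0. For each odd n ≥ 3 and S ∈ Σ_L let λ̃ be the Pinsker weight sequence with parameter t = t̃_n(S), let ι̃_0 be its index j_0, and set ϖ_j = Σ_{i=0}^k (2π⌊j/2⌋/(b−a))^{2i}. Define υ_n(S) = n^{2k/(2k+1)} · sup_{j ≥ ι̃_0} (1 − λ̃(j))²/ϖ_j and υ*(S) = ((b−a)/π)^{2k} · (A_k · r/J(S))^{−2k/(2k+1)}. Then limsup_{n→∞, n odd} sup_{S ∈ Σ_L} υ_n(S)/υ*(S) ≤ 1. -/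

import Mathlib

open MeasureTheory Real Set Filter

noncomputable section

/-- `f` is Lipschitz with constant `L` and continuous. -/
def IsLip (L : ℝ) (f : ℝ → ℝ) : Prop :=
  Continuous f ∧ ∀ x y : ℝ, |f x - f y| ≤ L * |x - y|

/-- The functional class `Σ_L`. -/
def SigmaL (L : ℝ) (S : ℝ → ℝ) : Prop :=
  IsLip L S ∧ (∀ z : ℝ, |z| ≤ L → |S z| ≤ L) ∧
  ∃ S' : ℝ → ℝ, ContinuousOn S' {x : ℝ | L ≤ |x|} ∧
    ∀ x : ℝ, L ≤ |x| → HasDerivAt S (S' x) x ∧ -L ≤ S' x ∧ S' x ≤ -(1/L)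

/-- Normalizing constant of the ergodic density. -/
def qdenom (S : ℝ → ℝ) : ℝ := ∫ y : ℝ, Real.exp (2 * ∫ z in (0:ℝ)..y, S z)

/-- The ergodic density `q_S`. -/
def qdens (S : ℝ → ℝ) (x : ℝ) : ℝ :=
  Real.exp (2 * ∫ z in (0:ℝ)..x, S z) / qdenom S

/-- `J(S) = ∫_a^b 1/q_S(u) du`. -/
def Jfun (a b : ℝ) (S : ℝ → ℝ) : ℝ := ∫ u in a..b, 1 / qdens S u

end

noncomputable section

/-- `ε_n = 1 / ln n`. -/
def epsn (n : ℕ) : ℝ := 1 / Real.log n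

/-- `t̃_n(S) = ε_n · min{ i ≥ 1 : i ε_n ≥ r/J(S) }`. -/
def ttilde (a b r : ℝ) (n : ℕ) (S : ℝ → ℝ) : ℝ :=
  epsn n * (sInf {i : ℕ | 1 ≤ i ∧ r / Jfun a b S ≤ (i : ℝ) * epsn n} : ℕ)

/-- `A_k = (b−a)^{2k+1}(k+1)(2k+1)/(π^{2k} k)`. -/
def Ak (a b : ℝ) (k : ℕ) : ℝ :=
  (b - a) ^ (2 * k + 1) * ((k : ℝ) + 1) * (2 * (k : ℝ) + 1) / (Real.pi ^ (2 * k) * k)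

/-- `ω = (A_k t n)^{1/(2k+1)}`. -/
def pinskerOmega (a b : ℝ) (k : ℕ) (t : ℝ) (n : ℕ) : ℝ :=
  (Ak a b k * t * n) ^ ((1 : ℝ) / (2 * k + 1))

/-- `j_0 = ⌊ω / ln(n+2)⌋ + 1`. -/
def pinskerJ0 (a b : ℝ) (k : ℕ) (t : ℝ) (n : ℕ) : ℕ :=
  ⌊pinskerOmega a b k t n / Real.log (n + 2)⌋₊ + 1

/-- The Pinsker weights: `λ(j) = 1` for `j ≤ j_0`,
`λ(j) = (1 − (j/ω)^k)₊` for `j_0 < j ≤ n`, and `λ(j) = 0` for `j > n`. -/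
def pinskerWeight (a b : ℝ) (k : ℕ) (t : ℝ) (n : ℕ) (j : ℕ) : ℝ :=
  if j ≤ pinskerJ0 a b k t n then 1
  else if j ≤ n then max 0 (1 - ((j : ℝ) / pinskerOmega a b k t n) ^ k)
  else 0

end

noncomputable section

/-- `ϖ_j = Σ_{i=0}^k (2π⌊j/2⌋/(b−a))^{2i}` (with `0^0 = 1`). -/
def varpi (a b : ℝ) (k : ℕ) (j : ℕ) : ℝ :=
  ∑ i ∈ Finset.range (k + 1), (2 * Real.pi * ((j / 2 : ℕ) : ℝ) / (b - a)) ^ (2 * i)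

/-- `υ_n(S) = n^{2k/(2k+1)} sup_{j ≥ ι̃_0} (1−λ̃(j))²/ϖ_j`. -/
def upsn (a b : ℝ) (k : ℕ) (r : ℝ) (n : ℕ) (S : ℝ → ℝ) : ℝ :=
  (n : ℝ) ^ ((2 * (k : ℝ)) / (2 * k + 1)) *
    ⨆ j : {j : ℕ // pinskerJ0 a b k (ttilde a b r n S) n ≤ j},
      (1 - pinskerWeight a b k (ttilde a b r n S) n j) ^ 2 / varpi a b k j

/-- `υ*(S) = ((b−a)/π)^{2k} (A_k r/J(S))^{−2k/(2k+1)}`. -/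
def upsstar (a b : ℝ) (k : ℕ) (r : ℝ) (S : ℝ → ℝ) : ℝ :=
  ((b - a) / Real.pi) ^ (2 * k) *
    (Ak a b k * (r / Jfun a b S)) ^ (-(2 * (k : ℝ)) / (2 * k + 1))

end

theorem aux_J (L a b : ℝ) (hL : 1 ≤ L) (hba : 1 ≤ b - a) :
    ∃ c : ℝ, 0 < c ∧ ∀ S : ℝ → ℝ, SigmaL L S → Jfun a b S = 0 ∨ c ≤ Jfun a b S := by
  set M : ℝ := |a| + |b| + 1 with hM
  set K : ℝ := (L + L * M) * M with hK
  have hM1 : 1 ≤ M := by rw [hM]; linarith [abs_nonneg a, abs_nonneg b]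
  refine ⟨Real.exp (-(2*K)) / Real.exp (2*K), by positivity, ?_⟩
  intro S hS
  by_cases hint : Integrable (fun y : ℝ => Real.exp (2 * ∫ z in (0:ℝ)..y, S z))
  swap
  · left
    have : qdenom S = 0 := integral_undef hint
    simp [Jfun, qdens, this]
  right
  obtain ⟨⟨hc, hlip⟩, hb, -⟩ := hS
  have hS0 : |S 0| ≤ L := hb 0 (by simp; linarith)
  have hSz : ∀ z, |S z| ≤ L + L * |z| := by
    intro z
    have h1 := hlip z 0
    rw [sub_zero] at h1
    have h2 : |S z| ≤ |S z - S 0| + |S 0| := by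
      have := abs_add_le (S z - S 0) (S 0)
      simpa using this
    linarith
  have hI : ∀ u, |u| ≤ M → |∫ z in (0:ℝ)..u, S z| ≤ K := by
    intro u hu
    have h1 : ‖∫ z in (0:ℝ)..u, S z‖ ≤ (L + L * M) * |u - 0| := by
      apply intervalIntegral.norm_integral_le_of_norm_le_const
      intro z hz
      have hz2 : |z| ≤ |u| := by
        have := Set.abs_sub_left_of_mem_uIcc (Set.uIoc_subset_uIcc hz)
        simpa using this
      rw [Real.norm_eq_abs]
      refine (hSz z).trans ?_
      gcongr
      linarith
    rw [sub_zero, Real.norm_eq_abs] at h1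
    refine h1.trans ?_
    rw [hK]
    gcongr
  have hcont : Continuous (fun y : ℝ => Real.exp (2 * ∫ z in (0:ℝ)..y, S z)) := by
    have : Continuous (fun y : ℝ => ∫ z in (0:ℝ)..y, S z) :=
      intervalIntegral.continuous_primitive (fun a b => hc.intervalIntegrable a b) 0
    fun_prop
  have hq : Real.exp (-(2*K)) ≤ qdenom S := by
    have h1 : ∫ y in (0:ℝ)..1, Real.exp (-(2*K)) ≤
        ∫ y in (0:ℝ)..1, Real.exp (2 * ∫ z in (0:ℝ)..y, S z) := by
      apply intervalIntegral.integral_mono_on (by norm_num)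
      · exact continuous_const.intervalIntegrable _ _
      · exact hcont.intervalIntegrable _ _
      · intro x hx
        have := (abs_le.1 (hI x (by rw [abs_of_nonneg hx.1]; linarith [hx.2]))).1
        apply Real.exp_le_exp.2
        linarith
    rw [intervalIntegral.integral_of_le (by norm_num : (0:ℝ) ≤ 1),
      intervalIntegral.integral_of_le (by norm_num : (0:ℝ) ≤ 1)] at h1
    simp only [setIntegral_const] at h1
    have h2 := setIntegral_le_integral (s := Set.Ioc (0:ℝ) 1) hint
      (Filter.Eventually.of_forall fun y => (Real.exp_pos _).le)
    unfold qdenom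
    refine le_trans ?_ h2
    simpa using h1
  have hqpos : 0 < qdenom S := (Real.exp_pos _).trans_le hq
  have h3 : ∫ u in a..b, Real.exp (-(2*K)) / Real.exp (2*K) ≤ Jfun a b S := by
    unfold Jfun
    apply intervalIntegral.integral_mono_on (by linarith)
    · exact continuous_const.intervalIntegrable _ _
    · apply Continuous.intervalIntegrable
      unfold qdens
      apply Continuous.div continuous_const
      · exact hcont.div_const _
      · intro x
        positivity
    · intro x hx
      have hxM : |x| ≤ M := by
        rw [hM, abs_le]
        constructor
        · linarith [hx.1, neg_abs_le a, abs_nonneg b]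
        · linarith [hx.2, le_abs_self b, abs_nonneg a]
      have := (abs_le.1 (hI x hxM)).2
      unfold qdens
      rw [one_div_div]
      gcongr
  rw [intervalIntegral.integral_const, smul_eq_mul] at h3
  have hp : 0 < Real.exp (-(2*K)) / Real.exp (2*K) := by positivity
  nlinarith

theorem aux_t (a b r : ℝ) (n : ℕ) (S : ℝ → ℝ) (he : 0 < epsn n) (hJ : 0 < r / Jfun a b S) :
    r / Jfun a b S ≤ ttilde a b r n S ∧ epsn n ≤ ttilde a b r n S ∧
      ttilde a b r n S ≤ r / Jfun a b S + epsn n := by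
  unfold ttilde
  set ρ := r / Jfun a b S
  set s : Set ℕ := {i : ℕ | 1 ≤ i ∧ ρ ≤ (i : ℝ) * epsn n} with hs
  have hne : s.Nonempty := by
    obtain ⟨m, hm⟩ := exists_nat_ge (ρ / epsn n)
    refine ⟨m + 1, by omega, ?_⟩
    rw [div_le_iff₀ he] at hm
    push_cast
    nlinarith
  obtain ⟨h1, h2⟩ := Nat.sInf_mem hne
  have h1' : (1:ℝ) ≤ (sInf s : ℕ) := by exact_mod_cast h1
  refine ⟨by linarith [mul_comm (epsn n) ((sInf s : ℕ) : ℝ)], by nlinarith, ?_⟩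
  by_cases h : sInf s = 1
  · rw [h]; push_cast; linarith
  · have hnot : (sInf s - 1) ∉ s := Nat.notMem_of_lt_sInf (by omega)
    have h3 : ¬ ρ ≤ ((sInf s - 1 : ℕ) : ℝ) * epsn n := by
      intro hh
      exact hnot ⟨by omega, hh⟩
    rw [Nat.cast_sub h1] at h3
    push_cast at h3
    nlinarith

theorem aux_w (a b : ℝ) (hab : a < b) (k : ℕ) (t : ℝ) (n : ℕ)
    (hω : 0 < pinskerOmega a b k t n) (hωn : pinskerOmega a b k t n ≤ n) (j : ℕ)
    (hj : pinskerJ0 a b k t n ≤ j) :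
    (1 - pinskerWeight a b k t n j) ^ 2 / varpi a b k j ≤
      (1 + 1 / (pinskerJ0 a b k t n : ℝ)) ^ (2 * k) *
        (((b - a) / Real.pi) ^ (2 * k) * (pinskerOmega a b k t n ^ (2 * k))⁻¹) := by
  have hba : 0 < b - a := by linarith
  set ω := pinskerOmega a b k t n
  have hJ1 : 1 ≤ pinskerJ0 a b k t n := by unfold pinskerJ0; omega
  unfold pinskerWeight
  set m := pinskerJ0 a b k t n
  have hm : (1:ℝ) ≤ m := by exact_mod_cast hJ1
  by_cases h1 : j ≤ m
  · simp only [h1, if_true]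
    simp only [sub_self, ne_eq, OfNat.ofNat_ne_zero, not_false_eq_true, zero_pow, zero_div]
    positivity
  simp only [h1, if_false]
  have hmj : (m:ℝ) + 1 ≤ j := by exact_mod_cast (by omega : m + 1 ≤ j)
  have hjω : 0 < (j:ℝ) / ω := by apply div_pos _ hω; linarith
  have hnum : (1 - (if j ≤ n then max 0 (1 - ((j : ℝ) / ω) ^ k) else 0)) ^ 2 ≤
      ((j:ℝ)/ω) ^ (2 * k) := by
    rw [mul_comm 2 k, pow_mul]
    have hp : 0 < ((j:ℝ)/ω)^k := by positivity
    split_ifs with h2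
    · apply pow_le_pow_left₀
      · have : max 0 (1 - ((j : ℝ) / ω) ^ k) ≤ 1 := max_le (by norm_num) (by linarith)
        linarith
      · linarith [le_max_right 0 (1 - ((j : ℝ) / ω) ^ k)]
    · have hjn : (n:ℝ) ≤ j := by exact_mod_cast (by omega : n ≤ j)
      have : 1 ≤ (j:ℝ)/ω := by rw [le_div_iff₀ hω]; linarith
      have h3 : 1 ≤ ((j:ℝ)/ω)^k := one_le_pow₀ this
      rw [sub_zero]
      exact pow_le_pow_left₀ (by norm_num) h3 2
  have hfl : (j:ℝ) - 1 ≤ 2 * ((j/2 : ℕ):ℝ) := by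
    have : j ≤ 2 * (j/2) + 1 := by omega
    have h : (j:ℝ) ≤ 2 * ((j/2:ℕ):ℝ) + 1 := by exact_mod_cast this
    linarith
  have hden : (Real.pi * (j - 1) / (b - a)) ^ (2 * k) ≤ varpi a b k j := by
    have h1 : (2 * Real.pi * ((j / 2 : ℕ) : ℝ) / (b - a)) ^ (2 * k) ≤ varpi a b k j := by
      unfold varpi
      apply Finset.single_le_sum
        (f := fun i => (2 * Real.pi * ((j / 2 : ℕ) : ℝ) / (b - a)) ^ (2 * i))
      · intro i _
        positivity
      · simp
    refine le_trans ?_ h1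
    apply pow_le_pow_left₀
    · apply div_nonneg _ hba.le
      apply mul_nonneg Real.pi_pos.le; linarith
    · apply div_le_div_of_nonneg_right _ hba.le
      nlinarith [Real.pi_pos]
  have hj1 : 0 < (j:ℝ) - 1 := by linarith
  have hdp : 0 < (Real.pi * (j - 1) / (b - a)) ^ (2 * k) := by positivity
  calc _ ≤ ((j:ℝ)/ω) ^ (2 * k) / (Real.pi * (j - 1) / (b - a)) ^ (2 * k) := by
        gcongr
    _ = ((j:ℝ)/(j-1)) ^ (2 * k) * (((b - a) / Real.pi) ^ (2 * k) * (ω ^ (2 * k))⁻¹) := by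
        rw [← inv_pow, ← mul_pow, ← mul_pow, ← div_pow]
        congr 1
        field_simp
    _ ≤ _ := by
        gcongr
        rw [div_le_iff₀ hj1]
        have : 1 / (m:ℝ) * m = 1 := by field_simp
        have h0 : 0 < 1 / (m:ℝ) := by positivity
        nlinarith

/-- `limsup_{n→∞, n odd} sup_{S∈Σ_L} υ_n(S)/υ*(S) ≤ 1`. -/
theorem stmt8 (L a b : ℝ) (hL : 1 ≤ L) (hab : a < b) (hba : 1 ≤ b - a)
    (k : ℕ) (hk : 1 ≤ k) (r : ℝ) (hr : 0 < r) :
    ∀ δ : ℝ, 0 < δ → ∃ N : ℕ, 3 ≤ N ∧ ∀ n : ℕ, N ≤ n → Odd n →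
      ∀ S : ℝ → ℝ, SigmaL L S →
        upsn a b k r n S / upsstar a b k r S ≤ 1 + δ := by
  intro δ hδ
  obtain ⟨c, hc, hJ⟩ := aux_J L a b hL hba
  have hA : 0 < Ak a b k := by
    unfold Ak
    have : 0 < b - a := by linarith
    have : (0:ℝ) < k := by exact_mod_cast hk
    positivity
  set A := Ak a b k with hAdef
  have hk0 : (1:ℝ) ≤ k := by exact_mod_cast hk
  obtain ⟨η, hη, hηδ⟩ : ∃ η : ℝ, 0 < η ∧ (1 + η) ^ (2 * k) ≤ 1 + δ := by
    have h1 : Tendsto (fun x : ℝ => (1 + x) ^ (2 * k)) (nhdsWithin 0 (Set.Ioi 0)) (nhds 1) := by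
      have : Continuous (fun x : ℝ => (1 + x) ^ (2 * k)) := by fun_prop
      have h := this.tendsto 0
      simp only [add_zero, one_pow] at h
      exact h.mono_left nhdsWithin_le_nhds
    have h2 := h1.eventually (gt_mem_nhds (by linarith : (1:ℝ) < 1 + δ))
    obtain ⟨x, hx1, hx2⟩ := (h2.and self_mem_nhdsWithin).exists
    exact ⟨x, hx2, hx1.le⟩
  set C : ℝ := (2 / η) ^ (2 * k + 1) / A with hC
  have hCpos : 0 < C := by positivity
  have hE : ∀ᶠ n : ℕ in atTop, C * Real.log n ^ (2 * k + 2) ≤ n := by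
    have h := (isLittleO_pow_log_id_atTop (n := 2 * k + 2)).bound (inv_pos.2 hCpos)
    have h2 := tendsto_natCast_atTop_atTop (R := ℝ) |>.eventually h
    filter_upwards [h2] with n hn
    simp only [id, Real.norm_eq_abs, Nat.abs_cast] at hn
    have h3 := (le_abs_self _).trans hn
    calc C * Real.log n ^ (2 * k + 2) ≤ C * (C⁻¹ * n) := by gcongr
      _ = n := by field_simp
  obtain ⟨N1, hN1⟩ := eventually_atTop.1 hE
  obtain ⟨N2, hN2⟩ := exists_nat_ge (A * (r / c + 1))
  refine ⟨max 3 (max N1 N2), le_max_left _ _, ?_⟩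
  intro n hn _ S hS
  have hn3 : 3 ≤ n := (le_max_left _ _).trans hn
  have hn1 := hN1 n ((le_max_left _ _).trans ((le_max_right _ _).trans hn))
  have hn2 : N2 ≤ n := (le_max_right _ _).trans ((le_max_right _ _).trans hn)
  have hn3' : (3:ℝ) ≤ n := by exact_mod_cast hn3
  have hn2' : A * (r / c + 1) ≤ n := hN2.trans (by exact_mod_cast hn2)
  rcases hJ S hS with h0 | hJc
  · have : upsstar a b k r S = 0 := by
      unfold upsstar
      rw [h0, div_zero, mul_zero, Real.zero_rpow, mul_zero]
      have : (0:ℝ) < 2 * k + 1 := by linarith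
      apply div_ne_zero _ this.ne'
      have : (0:ℝ) < 2 * k := by linarith
      linarith
    rw [this, div_zero]
    linarith
  have hJpos : 0 < Jfun a b S := hc.trans_le hJc
  have hlog : 1 ≤ Real.log n := by
    rw [Real.le_log_iff_exp_le (by linarith)]
    linarith [Real.exp_one_lt_d9]
  have he : 0 < epsn n := by unfold epsn; positivity
  have he1 : epsn n ≤ 1 := by
    unfold epsn; rw [div_le_one (by linarith)]; exact hlog
  have hρ : 0 < r / Jfun a b S := by positivity
  obtain ⟨ht1, ht2, ht3⟩ := aux_t a b r n S he hρ
  have hρc : r / Jfun a b S ≤ r / c := by gcongr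
  unfold upsn upsstar
  set t := ttilde a b r n S
  set ρ := r / Jfun a b S
  have htpos : 0 < t := by linarith
  have hnpos : (0:ℝ) < n := by linarith
  have hX : 0 < A * t * n := by positivity
  have hω : 0 < pinskerOmega a b k t n := by
    unfold pinskerOmega
    exact Real.rpow_pos_of_pos hX _
  have hppos : (0:ℝ) < 2 * k + 1 := by linarith
  have hωp : pinskerOmega a b k t n ^ (2 * k + 1) = A * t * n := by
    unfold pinskerOmega
    rw [← Real.rpow_natCast, ← Real.rpow_mul hX.le]
    push_cast
    rw [one_div_mul_cancel hppos.ne', Real.rpow_one]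
  have hωn : pinskerOmega a b k t n ≤ n := by
    apply le_of_pow_le_pow_left₀ (n := 2 * k + 1) (by omega) hnpos.le
    rw [hωp, pow_succ]
    gcongr
    calc A * t ≤ A * (r / c + 1) := by gcongr; linarith
      _ ≤ n := hn2'
      _ ≤ (n:ℝ) ^ (2 * k) := le_self_pow₀ (by linarith) (by omega)
  have hω2k : pinskerOmega a b k t n ^ (2 * k) = (A * t * n) ^ ((2 * (k:ℝ)) / (2 * k + 1)) := by
    unfold pinskerOmega
    rw [← Real.rpow_natCast, ← Real.rpow_mul hX.le]
    push_cast
    congr 1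
    ring
  have hωlow : 2 * Real.log n / η ≤ pinskerOmega a b k t n := by
    apply le_of_pow_le_pow_left₀ (n := 2 * k + 1) (by omega) hω.le
    rw [hωp]
    have h1 : A * (C * Real.log n ^ (2 * k + 2)) ≤ A * n := by gcongr
    have h2 : A * (C * Real.log n ^ (2 * k + 2)) =
        (2 * Real.log n / η) ^ (2 * k + 1) * Real.log n := by
      rw [hC, div_pow, div_pow, mul_pow, pow_succ (Real.log n) (2 * k + 1)]
      field_simp
    rw [h2] at h1
    have h3 : A * epsn n * n ≤ A * t * n := by gcongr
    refine le_trans ?_ h3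
    unfold epsn
    rw [show A * (1 / Real.log n) * n = A * n / Real.log n by ring,
      le_div_iff₀ (by linarith)]
    exact h1
  have hJ0 : 1 / (pinskerJ0 a b k t n : ℝ) ≤ η := by
    have h1 : pinskerOmega a b k t n / Real.log (n + 2) ≤ pinskerJ0 a b k t n := by
      unfold pinskerJ0
      push_cast
      exact (Nat.lt_floor_add_one _).le
    have hl0 : 0 < Real.log ((n:ℝ) + 2) := Real.log_pos (by linarith)
    have hl : Real.log ((n:ℝ) + 2) ≤ 2 * Real.log n := by
      have : 2 * Real.log n = Real.log ((n:ℝ)^2) := by rw [Real.log_pow]; norm_num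
      rw [this]
      apply Real.log_le_log (by linarith)
      nlinarith
    have h2 : 1 / η ≤ pinskerOmega a b k t n / Real.log (n + 2) := by
      rw [le_div_iff₀ hl0]
      refine le_trans ?_ hωlow
      rw [div_mul_eq_mul_div, one_mul]
      gcongr
    have h3 := h2.trans h1
    rw [one_div_le (by exact lt_of_lt_of_le (by positivity) h3) hη]
    exact h3
  set B : ℝ := ((b - a) / Real.pi) ^ (2 * k)
  have hB : 0 < B := by
    have : 0 < b - a := by linarith
    positivity
  set e : ℝ := (2 * (k:ℝ)) / (2 * k + 1) with he_def
  have hepos : 0 < e := by positivity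
  have hsup : (⨆ j : {j : ℕ // pinskerJ0 a b k t n ≤ j},
      (1 - pinskerWeight a b k t n j) ^ 2 / varpi a b k j) ≤
      (1 + δ) * (B * ((A * ρ * n) ^ e)⁻¹) := by
    have : Nonempty {j : ℕ // pinskerJ0 a b k t n ≤ j} := ⟨⟨_, le_rfl⟩⟩
    apply ciSup_le
    rintro ⟨j, hj⟩
    refine (aux_w a b hab k t n hω hωn j hj).trans ?_
    have h1 : (1 + 1 / (pinskerJ0 a b k t n : ℝ)) ^ (2 * k) ≤ 1 + δ := by
      refine le_trans ?_ hηδ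
      gcongr
    rw [hω2k]
    gcongr
  have hneg : -(2 * (k:ℝ)) / (2 * k + 1) = -e := by rw [he_def]; ring
  rw [hneg, Real.rpow_neg (by positivity)]
  have hAρ : 0 < (A * ρ) ^ e := Real.rpow_pos_of_pos (by positivity) _
  have hne : 0 < (n:ℝ) ^ e := Real.rpow_pos_of_pos hnpos _
  rw [div_le_iff₀ (by positivity)]
  calc _ ≤ (n:ℝ) ^ e * ((1 + δ) * (B * ((A * ρ * n) ^ e)⁻¹)) := by gcongr
    _ = _ := by
      rw [Real.mul_rpow (by positivity) hnpos.le, mul_inv]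
      have h1 : (n:ℝ) ^ e * ((n:ℝ) ^ e)⁻¹ = 1 := mul_inv_cancel₀ hne.ne'
      linear_combination ((1 + δ) * (B * ((A * ρ) ^ e)⁻¹)) * h1
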